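/- arXiv:2605.20974 — 2 statements merged into one kernel-verified Lean document; each statement's English description precedes it below -/
import Mathlib

section
/- Let N ≤ S be submonoids of a cancellative commutative monoid M, let b ∈ N, ℓ ∈ ℕ, and Ω ⊆ Z_{N,ℓ}(b). If S is Ω-admissible over N, then the map sending a multiset z to z.map ρ, where ρ : Associates ↥N → Associates ↥S is induced by the inclusion, restricts to an injection of Ω into Z_{S,ℓ}(b). In particular, if Ω is infinite, then S is not an FFM. -/
/-- The induced monoid homomorphism `Associates α →* Associates β`. -/
def associatesMap {α β : Type*} [CommMonoid α] [CommMonoid β] (f : α →* β) :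
    Associates α →* Associates β where
  toFun := Quotient.lift (fun a => Associates.mk (f a)) fun _ _ h =>
    Associates.mk_eq_mk_iff_associated.2 (h.map f)
  map_one' := by
    show Associates.mk (f 1) = 1
    simp
  map_mul' := by
    rintro ⟨x⟩ ⟨y⟩
    show Associates.mk (f (x * y)) = Associates.mk (f x) * Associates.mk (f y)
    simp [Associates.mk_mul_mk]

/-- The set of factorizations of `b` in the submonoid `S`. -/
def ZSet {M : Type*} [CancelCommMonoid M] (S : Submonoid M) (b : S) :
    Set (Multiset (Associates S)) :=
  {z | (∀ a ∈ z, Irreducible a) ∧ z.prod = Associates.mk b}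

/-- The set of length-`ℓ` factorizations of `b` in `S`. -/
def ZSetLen {M : Type*} [CancelCommMonoid M] (S : Submonoid M) (b : S) (ℓ : ℕ) :
    Set (Multiset (Associates S)) :=
  {z ∈ ZSet S b | Multiset.card z = ℓ}

/-- `S` is an FFM. -/
def IsFFM {M : Type*} [CancelCommMonoid M] (S : Submonoid M) : Prop :=
  ∀ b : S, (ZSet S b).Nonempty ∧ (ZSet S b).Finite

/-- `u` is a unit of the submonoid `S`. -/
def IsUnitIn {M : Type*} [CancelCommMonoid M] (S : Submonoid M) (u : M) : Prop :=
  ∃ v ∈ S, u * v = 1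

/-- `S` is unit-reflecting over `N`. -/
def UnitReflecting {M : Type*} [CancelCommMonoid M] (N S : Submonoid M) : Prop :=
  ∀ u ∈ S, IsUnitIn S u → ∀ x ∈ N, ∀ y ∈ N, u * y = x → u ∈ N ∧ IsUnitIn N u

/-- `S` is `Ω`-admissible over `N`: `N ≤ S`, `S` is unit-reflecting over `N`, and
every `a ∈ N` whose class in `Associates ↥N` occurs in some `z ∈ Ω` has irreducible
class in `Associates ↥S`. -/
def OmegaAdmissible {M : Type*} [CancelCommMonoid M] (N S : Submonoid M)
    (Ω : Set (Multiset (Associates N))) : Prop :=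
  N ≤ S ∧ UnitReflecting N S ∧
    ∀ (a : M) (haN : a ∈ N) (haS : a ∈ S),
      (∃ z ∈ Ω, Associates.mk (⟨a, haN⟩ : N) ∈ z) →
        Irreducible (Associates.mk (⟨a, haS⟩ : S))

/-!
Unit-reflection says that an associating unit of `S` between two elements of `N` already lies in
`Nˣ`, so `N` and `S` induce the same association relation on `N` and `ρ` is injective; hence so is
`z ↦ z.map ρ`. Since `ρ` is multiplicative, it preserves the product and the length of a
factorization, and admissibility is exactly what keeps its factors irreducible. An infinite `Ω` thus
yields infinitely many factorizations of `b` in `S`.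
-/

section AssociatesMap

variable {α β : Type*} [CommMonoid α] [CommMonoid β]

@[simp]
theorem associatesMap_mk (f : α →* β) (a : α) :
    associatesMap f (Associates.mk a) = Associates.mk (f a) :=
  rfl

theorem associatesMap_injective_iff {f : α →* β} :
    Function.Injective (associatesMap f) ↔
      ∀ x y, Associated (f x) (f y) → Associated x y := by
  simp only [Function.Injective, Associates.forall_associated, associatesMap_mk,
    Associates.mk_eq_mk_iff_associated]

end AssociatesMap

section Submonoid

variable {M : Type*} [CancelCommMonoid M] {N S : Submonoid M}

theorem isUnitIn_coe_iff {u : S} : IsUnitIn S (u : M) ↔ IsUnit u := by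
  simp only [IsUnitIn, isUnit_iff_exists_inv, Subtype.exists, Subtype.ext_iff, Submonoid.coe_mul,
    Submonoid.coe_one, exists_prop]

theorem UnitReflecting.associated_of_associated_inclusion (hrefl : UnitReflecting N S)
    (hle : N ≤ S) {x y : N}
    (hxy : Associated (Submonoid.inclusion hle x) (Submonoid.inclusion hle y)) :
    Associated x y := by
  obtain ⟨u, hu⟩ := hxy
  have hmul : (x : M) * (u : S) = y := congrArg Subtype.val hu
  obtain ⟨huN, hunit⟩ := hrefl (u : S) (u : S).2 (isUnitIn_coe_iff.2 u.isUnit) y y.2 x x.2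
    ((mul_comm _ _).trans hmul)
  have hunitN : IsUnit (⟨(u : S), huN⟩ : N) := isUnitIn_coe_iff.1 hunit
  exact ⟨hunitN.unit, Subtype.ext hmul⟩

theorem UnitReflecting.associatesMap_inclusion_injective (hrefl : UnitReflecting N S)
    (hle : N ≤ S) : Function.Injective (associatesMap (Submonoid.inclusion hle)) :=
  associatesMap_injective_iff.2 fun _ _ => hrefl.associated_of_associated_inclusion hle

theorem OmegaAdmissible.irreducible_associatesMap_inclusion {Ω : Set (Multiset (Associates N))}
    (hadm : OmegaAdmissible N S Ω) (hle : N ≤ S) {z : Multiset (Associates N)} (hz : z ∈ Ω)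
    {a : Associates N} (ha : a ∈ z) :
    Irreducible (associatesMap (Submonoid.inclusion hle) a) := by
  obtain ⟨x, rfl⟩ := Associates.mk_surjective a
  exact hadm.2.2 x x.2 (hle x.2) ⟨z, hz, ha⟩

end Submonoid

theorem map_associatesMap_mem_zSet {α M : Type*} [CommMonoid α] [CancelCommMonoid M]
    {S : Submonoid M} (f : α →* S) {b : α} {z : Multiset (Associates α)}
    (hprod : z.prod = Associates.mk b) (hirr : ∀ a ∈ z, Irreducible (associatesMap f a)) :
    z.map (associatesMap f) ∈ ZSet S (f b) :=
  ⟨Multiset.forall_mem_map_iff.2 hirr, by rw [Multiset.prod_hom, hprod, associatesMap_mk]⟩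

/-- Persistence of a fixed family: if `S` is `Ω`-admissible over `N` for
`Ω ⊆ Z_{N,ℓ}(b)`, then mapping each multiset along the induced map
`ρ : Associates ↥N → Associates ↥S` sends `Ω` injectively into `Z_{S,ℓ}(b)`.
In particular, if `Ω` is infinite, then `S` is not an FFM. -/
theorem persistence_of_fixed_family {M : Type*} [CancelCommMonoid M]
    (N S : Submonoid M) (hle : N ≤ S) (b : M) (hb : b ∈ N) (ℓ : ℕ)
    (Ω : Set (Multiset (Associates N))) (hΩ : Ω ⊆ ZSetLen N ⟨b, hb⟩ ℓ)
    (hadm : OmegaAdmissible N S Ω) :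
    (∀ z ∈ Ω, z.map (associatesMap (Submonoid.inclusion hle)) ∈
        ZSetLen S ⟨b, hle hb⟩ ℓ) ∧
    Set.InjOn (fun z : Multiset (Associates N) =>
        z.map (associatesMap (Submonoid.inclusion hle))) Ω ∧
    (Ω.Infinite → ¬ IsFFM S) := by
  set ρ := associatesMap (Submonoid.inclusion hle)
  have hmaps : ∀ z ∈ Ω, z.map ρ ∈ ZSetLen S ⟨b, hle hb⟩ ℓ := fun z hz => by
    obtain ⟨⟨_, hprod⟩, hcard⟩ := hΩ hz
    exact ⟨map_associatesMap_mem_zSet (Submonoid.inclusion hle) hprod fun _ =>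
      hadm.irreducible_associatesMap_inclusion hle hz, (Multiset.card_map ρ z).trans hcard⟩
  have hinj : Set.InjOn (Multiset.map ρ) Ω :=
    (Multiset.map_injective (hadm.2.1.associatesMap_inclusion_injective hle)).injOn
  refine ⟨hmaps, hinj, fun hinf hffm => ?_⟩
  have hZinf : (ZSet S ⟨b, hle hb⟩).Infinite :=
    Set.infinite_of_injOn_mapsTo hinj (fun z hz => (hmaps z hz).1) hinf
  exact hZinf (hffm ⟨b, hle hb⟩).2
end

section
/- Let M be a cancellative commutative monoid. Then every submonoid of M is an LFFM if and only if every undermonoid of M is an LFFM. -/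
/-- `S` is atomic: every element has a factorization. -/
def Atomic {M : Type*} [CancelCommMonoid M] (S : Submonoid M) : Prop :=
  ∀ b : S, (ZSet S b).Nonempty

/-- `S` is an LFFM: atomic, with all fixed-length factorization fibers finite. -/
def IsLFFM {M : Type*} [CancelCommMonoid M] (S : Submonoid M) : Prop :=
  Atomic S ∧ ∀ (b : S) (ℓ : ℕ), (ZSetLen S b ℓ).Finite

/-- A submonoid `N` of `M` is an undermonoid if every `m ∈ M` satisfies
`m * x = y` for some `x, y ∈ N`. -/
def IsUndermonoid {M : Type*} [CancelCommMonoid M] (N : Submonoid M) : Prop :=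
  ∀ m : M, ∃ x ∈ N, ∃ y ∈ N, m * x = y

/-!
Call a divisor of `b` nontrivial if it and its cofactor are nonunits. If every element of a
cancellative monoid has only finitely many nontrivial divisors, then the monoid is an LFFM.

For an undermonoid `N` and a nonunit `b ∈ N`, the submonoid `{1} ∪ bN` is again an undermonoid, has
trivial units, and has `b * x` as an atom whenever `b ∤ x`. Hence every splitting `b = x * y` into
nonunits gives a length-two factorization `(b * x) * (b * y)` of `b ^ 3` in `{1} ∪ bN`, and if the
latter is an LFFM there are only finitely many such `x`.

By Zorn's lemma, an arbitrary submonoid `S` lies in an undermonoid `N` such that every element of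
`S` which is a unit of `N` is a unit of `S`; nontrivial divisors in `S` are then nontrivial in `N`.
-/

section NontrivialDivisors

/-- The nonunit divisors of `b` with a nonunit cofactor. Associated divisors are not identified, so
finiteness of this set is stronger than finiteness up to units. -/
def nontrivialDivisors {A : Type*} [CommMonoid A] (b : A) : Set A :=
  {x | ¬IsUnit x ∧ ∃ y, ¬IsUnit y ∧ x * y = b}

section CommMonoid

variable {A B : Type*} [CommMonoid A] [CommMonoid B]

theorem nontrivialDivisors_subset_mul_right (x y : A) :
    nontrivialDivisors x ⊆ nontrivialDivisors (x * y) := by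
  rintro d ⟨hd, e, he, rfl⟩
  exact ⟨hd, e * y, fun h => he (isUnit_of_mul_isUnit_left h), (mul_assoc d e y).symm⟩

theorem nontrivialDivisors_eq_empty_of_isUnit {b : A} (hb : IsUnit b) :
    nontrivialDivisors b = ∅ := by
  refine Set.eq_empty_of_forall_notMem ?_
  rintro x ⟨hx, y, -, rfl⟩
  exact hx (isUnit_of_mul_isUnit_left hb)

theorem nontrivialDivisors_subset_preimage (f : A →* B) [IsLocalHom f] (b : A) :
    nontrivialDivisors b ⊆ f ⁻¹' nontrivialDivisors (f b) := by
  rintro x ⟨hx, y, hy, rfl⟩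
  exact ⟨mt (IsUnit.of_map f x) hx, f y, mt (IsUnit.of_map f y) hy, (map_mul f x y).symm⟩

theorem irreducible_associatesMk_iff {a : A} :
    Irreducible (Associates.mk a) ↔ Irreducible a := by
  have : IsLocalHom (Associates.mkMonoidHom (M := A)) := ⟨fun _ => Associates.isUnit_mk.1⟩
  refine ⟨fun h => .of_map (f := Associates.mkMonoidHom) h, fun h => ?_⟩
  refine irreducible_iff.2 ⟨mt Associates.isUnit_mk.1 h.not_isUnit, ?_⟩
  refine Associates.forall_associated.2 fun x => Associates.forall_associated.2 fun y hxy => ?_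
  rw [Associates.mk_mul_mk, Associates.mk_eq_mk_iff_associated] at hxy
  simpa only [Associates.isUnit_mk] using of_irreducible_mul (hxy.irreducible h)

theorem associated_or_mem_nontrivialDivisors {a b : A} (ha : Irreducible a) (hab : a ∣ b) :
    Associated a b ∨ a ∈ nontrivialDivisors b := by
  obtain ⟨y, rfl⟩ := hab
  by_cases hy : IsUnit y
  · exact .inl (associated_mul_unit_right a y hy)
  · exact .inr ⟨ha.not_isUnit, y, hy, rfl⟩

end CommMonoid

section IsCancelMul

variable {A : Type*} [CommMonoid A] [IsCancelMul A]

theorem not_mul_dvd_self_of_not_isUnit {x y : A} (hy : ¬IsUnit y) : ¬x * y ∣ x := by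
  rintro ⟨z, hz⟩
  rw [mul_assoc, left_eq_mul] at hz
  exact hy (.of_mul_eq_one z hz)

theorem nontrivialDivisors_ssubset_mul_right {x y : A} (hx : ¬IsUnit x) (hy : ¬IsUnit y) :
    nontrivialDivisors x ⊂ nontrivialDivisors (x * y) := by
  refine (Set.ssubset_iff_of_subset (nontrivialDivisors_subset_mul_right x y)).2
    ⟨x, ⟨hx, y, hy, rfl⟩, ?_⟩
  rintro ⟨-, z, hz, hxz⟩
  exact hz (mul_eq_left.1 hxz ▸ isUnit_one)

theorem exists_irreducible_factors_of_finite_nontrivialDivisors {b : A}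
    (hb : (nontrivialDivisors b).Finite) :
    ∃ z : Multiset A, (∀ a ∈ z, Irreducible a) ∧ Associated z.prod b := by
  induction hn : (nontrivialDivisors b).ncard using Nat.strong_induction_on generalizing b with
  | _ n ih =>
    subst hn
    have factors_left : ∀ x y : A, ¬IsUnit x → ¬IsUnit y → b = x * y →
        ∃ z : Multiset A, (∀ a ∈ z, Irreducible a) ∧ Associated z.prod x := by
      rintro x y hx hy rfl
      have hlt := nontrivialDivisors_ssubset_mul_right hx hy
      exact ih _ (Set.ncard_lt_ncard hlt hb) (hb.subset hlt.subset) rfl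
    by_cases hu : IsUnit b
    · exact ⟨0, by simp, by simpa using (associated_one_iff_isUnit.2 hu).symm⟩
    obtain hirr | ⟨x, y, hx, hy, hxy⟩ := irreducible_or_factor hu
    · exact ⟨{b}, by simpa using hirr, by simp⟩
    · obtain ⟨z, hz, hzx⟩ := factors_left x y hx hy hxy
      obtain ⟨w, hw, hwy⟩ := factors_left y x hy hx (hxy.trans (mul_comm x y))
      refine ⟨z + w, fun a ha => (Multiset.mem_add.1 ha).elim (hz a) (hw a), ?_⟩
      rw [Multiset.prod_add, hxy]
      exact hzx.mul_mul hwy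

end IsCancelMul

end NontrivialDivisors

theorem finite_multisets_card_eq {α : Type*} {s : Set α} (hs : s.Finite) (n : ℕ) :
    {z : Multiset α | (∀ a ∈ z, a ∈ s) ∧ z.card = n}.Finite := by
  classical
  refine (Set.finite_Iic (n • hs.toFinset.val)).subset ?_
  rintro z ⟨hzs, rfl⟩
  refine Multiset.le_iff_count.2 fun a => ?_
  by_cases ha : a ∈ z
  · have hmem : a ∈ hs.toFinset.val := hs.mem_toFinset.2 (hzs a ha)
    rw [Multiset.count_nsmul, Multiset.count_eq_one_of_mem hs.toFinset.nodup hmem, mul_one]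
    exact z.count_le_card a
  · simp [Multiset.count_eq_zero_of_notMem ha]

section LFFM

variable {M : Type*} [CancelCommMonoid M] {S : Submonoid M}

theorem atomic_of_finite_nontrivialDivisors (h : ∀ b : S, (nontrivialDivisors b).Finite) :
    Atomic S := by
  intro b
  obtain ⟨z, hz, hzb⟩ := exists_irreducible_factors_of_finite_nontrivialDivisors (h b)
  refine ⟨z.map Associates.mk, ?_, ?_⟩
  · simpa only [Multiset.forall_mem_map_iff, irreducible_associatesMk_iff] using hz
  · rw [Associates.prod_mk, Associates.mk_eq_mk_iff_associated]
    exact hzb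

theorem finite_zsetLen_of_finite_nontrivialDivisors {b : S} (hb : (nontrivialDivisors b).Finite)
    (ℓ : ℕ) : (ZSetLen S b ℓ).Finite := by
  have hatoms : (insert (Associates.mk b) (Associates.mk '' nontrivialDivisors b)).Finite :=
    (hb.image _).insert _
  refine (finite_multisets_card_eq hatoms ℓ).subset ?_
  rintro z ⟨⟨hz, hzb⟩, hcard⟩
  refine ⟨fun a ha => ?_, hcard⟩
  have hdvd : a ∣ Associates.mk b := hzb ▸ Multiset.dvd_prod ha
  have hirr := hz a ha
  obtain ⟨x, rfl⟩ := Associates.mk_surjective a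
  rw [Associates.mk_dvd_mk] at hdvd
  rw [irreducible_associatesMk_iff] at hirr
  exact (associated_or_mem_nontrivialDivisors hirr hdvd).imp
    Associates.mk_eq_mk_iff_associated.2 (Set.mem_image_of_mem _)

theorem isLFFM_of_finite_nontrivialDivisors (h : ∀ b : S, (nontrivialDivisors b).Finite) :
    IsLFFM S :=
  ⟨atomic_of_finite_nontrivialDivisors h,
    fun b => finite_zsetLen_of_finite_nontrivialDivisors (h b)⟩

theorem IsLFFM.finite_irreducible_mul_irreducible_eq (hS : IsLFFM S) (c : S) :
    {x : Associates S | Irreducible x ∧ ∃ y, Irreducible y ∧ x * y = Associates.mk c}.Finite := by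
  refine ((hS.2 c 2).biUnion fun z _ => z.finite_toSet).subset ?_
  rintro x ⟨hx, y, hy, hxy⟩
  refine Set.mem_biUnion (x := {x, y}) ⟨⟨?_, ?_⟩, Multiset.card_pair x y⟩ ?_
  · simp [hx, hy]
  · rwa [Multiset.prod_pair]
  · simp

end LFFM

section UnitizedPrincipalIdeal

variable {M : Type*} [CancelCommMonoid M] {N : Submonoid M}

/-- The submonoid `{1} ∪ bN` of `M`: the principal ideal of `N` generated by `b`, with an identity
adjoined. -/
def unitizedPrincipalIdeal (b : N) : Submonoid M where
  carrier := {m | m = 1 ∨ ∃ n : N, m = b * n}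
  one_mem' := .inl rfl
  mul_mem' := by
    rintro _ _ (rfl | ⟨n, rfl⟩) (rfl | ⟨k, rfl⟩)
    · exact .inl (one_mul 1)
    · exact .inr ⟨k, one_mul _⟩
    · exact .inr ⟨n, mul_one _⟩
    · exact .inr ⟨n * (b * k), mul_assoc _ _ _⟩

namespace unitizedPrincipalIdeal

/-- The product `b * x` as an element of `{1} ∪ bN`; with `1`, these are all its elements. -/
def generatorMul (b x : N) : unitizedPrincipalIdeal b :=
  ⟨b * x, .inr ⟨x, rfl⟩⟩

variable {b : N}

theorem eq_one_or_exists_generatorMul (t : unitizedPrincipalIdeal b) :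
    t = 1 ∨ ∃ x, t = generatorMul b x :=
  t.2.imp Subtype.ext fun ⟨x, hx⟩ => ⟨x, Subtype.ext hx⟩

theorem generatorMul_mul_generatorMul (x y : N) :
    generatorMul b x * generatorMul b y = generatorMul b (b * (x * y)) :=
  Subtype.ext (by simp only [generatorMul, Submonoid.coe_mul]; ac_rfl)

theorem generatorMul_injective (b : N) : Function.Injective (generatorMul b) := fun _ _ h =>
  Subtype.ext (mul_left_cancel (congrArg Subtype.val h))

theorem le (b : N) : unitizedPrincipalIdeal b ≤ N := by
  rintro _ (rfl | ⟨n, rfl⟩)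
  · exact N.one_mem
  · exact (b * n).2

theorem isUndermonoid (hN : IsUndermonoid N) (b : N) :
    IsUndermonoid (unitizedPrincipalIdeal b) := by
  intro m
  obtain ⟨x, hx, y, hy, rfl⟩ := hN m
  exact ⟨b * x, (generatorMul b ⟨x, hx⟩).2, b * (m * x), (generatorMul b ⟨m * x, hy⟩).2,
    mul_left_comm _ _ _⟩

theorem not_isUnit_generatorMul (hb : ¬IsUnit b) (x : N) : ¬IsUnit (generatorMul b x) := fun h =>
  hb (isUnit_of_mul_isUnit_left (y := x) (h.map (Submonoid.inclusion (le b))))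

theorem subsingleton_units (hb : ¬IsUnit b) : Subsingleton (unitizedPrincipalIdeal b)ˣ := by
  refine Subsingleton.units_of_isUnit fun t ht => ?_
  obtain rfl | ⟨x, rfl⟩ := eq_one_or_exists_generatorMul t
  · rfl
  · exact absurd ht (not_isUnit_generatorMul hb x)

theorem irreducible_generatorMul (hb : ¬IsUnit b) {x : N} (hbx : ¬b ∣ x) :
    Irreducible (generatorMul b x) := by
  refine irreducible_iff.2 ⟨not_isUnit_generatorMul hb x, fun s t hst => ?_⟩
  obtain rfl | ⟨n, rfl⟩ := eq_one_or_exists_generatorMul s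
  · exact .inl isUnit_one
  obtain rfl | ⟨k, rfl⟩ := eq_one_or_exists_generatorMul t
  · exact .inr isUnit_one
  rw [generatorMul_mul_generatorMul] at hst
  exact absurd ⟨n * k, generatorMul_injective b hst⟩ hbx

theorem finite_nontrivialDivisors (h : IsLFFM (unitizedPrincipalIdeal b)) :
    (nontrivialDivisors b).Finite := by
  by_cases hb : IsUnit b
  · simp [nontrivialDivisors_eq_empty_of_isUnit hb]
  have := subsingleton_units hb
  have hinj : Function.Injective fun x => Associates.mk (generatorMul b x) :=
    Associates.mk_injective.comp (generatorMul_injective b)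
  have hatom : ∀ x y : N, ¬IsUnit y → x * y = b →
      Irreducible (Associates.mk (generatorMul b x)) := fun x y hy hxy =>
    irreducible_associatesMk_iff.2
      (irreducible_generatorMul hb (hxy ▸ not_mul_dvd_self_of_not_isUnit hy))
  refine ((h.finite_irreducible_mul_irreducible_eq (generatorMul b (b * b))).preimage
    hinj.injOn).subset ?_
  rintro x ⟨hx, y, hy, hxy⟩
  refine ⟨hatom x y hy hxy, _, hatom y x hx (mul_comm y x ▸ hxy), ?_⟩
  rw [Associates.mk_mul_mk, generatorMul_mul_generatorMul, hxy]

end unitizedPrincipalIdeal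

end UnitizedPrincipalIdeal

section ReflectsUnits

/-- Every element of `S` that is invertible in `N` is already invertible in `S`. For `S ≤ N` this
says that the inclusion is a local homomorphism; the elementwise form does not presuppose `S ≤ N`,
so it can be maximized over all `N`. -/
def ReflectsUnits {M : Type*} [CommMonoid M] (S N : Submonoid M) : Prop :=
  ∀ s ∈ S, ∀ n ∈ N, s * n = 1 → n ∈ S

section CommMonoid

variable {M : Type*} [CommMonoid M] {S N : Submonoid M}

theorem ReflectsUnits.isLocalHom_inclusion (h : ReflectsUnits S N) (hSN : S ≤ N) :
    IsLocalHom (Submonoid.inclusion hSN) where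
  map_nonunit s hs := by
    obtain ⟨n, hn⟩ := isUnit_iff_exists_inv.1 hs
    have hsn : (s : M) * n = 1 := congrArg Subtype.val hn
    exact .of_mul_eq_one ⟨n, h s s.2 n n.2 hsn⟩ (Subtype.ext hsn)

theorem ReflectsUnits.sup_powers (h : ReflectsUnits S N) (hSN : S ≤ N) {c : M}
    (hc : ∀ j : ℕ, ∀ x ∈ N, c ^ j * x = 1 → c ^ j ∈ N) :
    ReflectsUnits S (N ⊔ Submonoid.powers c) := by
  intro s hs n hn hsn
  obtain ⟨y, hy, _, ⟨j, rfl⟩, rfl⟩ := Submonoid.mem_sup.1 hn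
  have hcj : c ^ j ∈ N := hc j (s * y) (mul_mem (hSN hs) hy) (by rw [← hsn]; ac_rfl)
  exact h s hs _ (mul_mem hy hcj) hsn

theorem exists_maximal_reflectsUnits (S : Submonoid M) :
    ∃ N, S ≤ N ∧ Maximal (ReflectsUnits S) N := by
  refine zorn_le_nonempty₀ {N | ReflectsUnits S N} ?_ S fun _ _ _ hn _ => hn
  intro c hc hchain K hK
  refine ⟨sSup c, fun s hs n hn hsn => ?_, fun _ => le_sSup⟩
  obtain ⟨L, hL, hnL⟩ := (Submonoid.mem_sSup_of_directedOn ⟨K, hK⟩ hchain.directedOn).1 hn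
  exact hc hL s hs n hnL hsn

theorem pow_mem_of_pow_mul_eq_one {c x : M} {j k : ℕ} (hk : k ≠ 0) (hck : c ^ k ∈ N) (hx : x ∈ N)
    (hcx : c ^ j * x = 1) : c ^ j ∈ N := by
  obtain ⟨i, rfl⟩ := Nat.exists_eq_succ_of_ne_zero hk
  have hpow : c ^ j = (c ^ (i + 1)) ^ j * x ^ i := by
    calc c ^ j = c ^ j * (c ^ j * x) ^ i := by rw [hcx, one_pow, mul_one]
      _ = (c ^ (i + 1)) ^ j * x ^ i := by rw [mul_pow, ← mul_assoc, ← pow_succ', pow_right_comm]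
  rw [hpow]
  exact mul_mem (pow_mem hck j) (pow_mem hx i)

theorem mem_of_maximal_reflectsUnits (hSN : S ≤ N) (hmax : Maximal (ReflectsUnits S) N) {c : M}
    (hc : ∀ j : ℕ, ∀ x ∈ N, c ^ j * x = 1 → c ^ j ∈ N) : c ∈ N :=
  hmax.le_of_ge (hmax.prop.sup_powers hSN hc) le_sup_left
    (le_sup_right (a := N) (Submonoid.mem_powers c))

end CommMonoid

variable {M : Type*} [CancelCommMonoid M] {S N : Submonoid M}

-- If `m` cannot be adjoined to `N`, then `m ^ j * x = 1` for some `j ≠ 0` and `x ∈ N`, and `m * x`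
-- can be adjoined because `(m * x) ^ j = x ^ (j - 1)` lies in `N`.
theorem isUndermonoid_of_maximal_reflectsUnits (hSN : S ≤ N)
    (hmax : Maximal (ReflectsUnits S) N) : IsUndermonoid N := by
  intro m
  by_cases hm : ∀ j : ℕ, ∀ x ∈ N, m ^ j * x = 1 → m ^ j ∈ N
  · exact ⟨1, N.one_mem, m, mem_of_maximal_reflectsUnits hSN hmax hm, mul_one m⟩
  · push Not at hm
    obtain ⟨j, x, hx, hmx, hmj⟩ := hm
    have hj : j ≠ 0 := by
      rintro rfl
      exact hmj (pow_zero m ▸ N.one_mem)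
    have hmxj : (m * x) ^ j ∈ N := by
      obtain ⟨i, rfl⟩ := Nat.exists_eq_succ_of_ne_zero hj
      rw [mul_pow, pow_succ' x, ← mul_assoc, hmx, one_mul]
      exact pow_mem hx i
    exact ⟨x, hx, m * x, mem_of_maximal_reflectsUnits hSN hmax fun _ _ =>
      pow_mem_of_pow_mul_eq_one hj hmxj, rfl⟩

end ReflectsUnits

/-- The LFFM property is detected by undermonoids: every submonoid of `M` is an
LFFM iff every undermonoid of `M` is an LFFM. -/
theorem lffm_detected_by_undermonoids (M : Type*) [CancelCommMonoid M] :
    (∀ S : Submonoid M, IsLFFM S) ↔ (∀ N : Submonoid M, IsUndermonoid N → IsLFFM N) := by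
  refine ⟨fun h N _ => h N, fun h S => isLFFM_of_finite_nontrivialDivisors fun b => ?_⟩
  obtain ⟨N, hSN, hmax⟩ := exists_maximal_reflectsUnits S
  have hN : IsUndermonoid N := isUndermonoid_of_maximal_reflectsUnits hSN hmax
  have hfin (c : N) : (nontrivialDivisors c).Finite :=
    unitizedPrincipalIdeal.finite_nontrivialDivisors
      (h _ (unitizedPrincipalIdeal.isUndermonoid hN c))
  have := hmax.prop.isLocalHom_inclusion hSN
  exact ((hfin (Submonoid.inclusion hSN b)).preimage
    (Submonoid.inclusion_injective hSN).injOn).subset (nontrivialDivisors_subset_preimage _ b)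
end
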